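/- Let G be a multigraph, k ≥ 1, and let C be a spanning subgraph of G such that (a) the maximal k-edge-connected subgraphs of C have the same vertex sets as those of G, and (b) C contains every k-interconnection edge of G. Then for every multigraph H whose vertex set contains V(G), and for every pair of vertices u, v of G ∪ H (the union graph, whose vertex set is V(G) ∪ V(H) and whose edge multiset is the multiset union of those of the two graphs), u and v belong to the same maximal k-edge-connected subgraph of C ∪ H if and only if they belong to the same maximal k-edge-connected subgraph of G ∪ H. -/

import Mathlib

universe u

structure Multigraph (V : Type u) where
  edges : Multiset (Sym2 V)
  loopless : ∀ e ∈ edges, ¬ e.IsDiag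

namespace Multigraph

variable {V : Type u}

/-- Reachability via the edges of a multiset of (undirected) edges. -/
def MReach (F : Multiset (Sym2 V)) : V → V → Prop :=
  Relation.ReflTransGen (fun x y => s(x, y) ∈ F)

/-- Reachability in a multigraph. -/
def Reachable (G : Multigraph V) : V → V → Prop := MReach G.edges

open Classical in
/-- Delete a multiset of edges. -/
noncomputable def deleteEdges (G : Multigraph V) (F : Multiset (Sym2 V)) : Multigraph V :=
  ⟨G.edges - F, fun e he => G.loopless e (Multiset.mem_of_le (tsub_le_self) he)⟩

/-- `lam G x y` : the minimum number of edges whose deletion disconnects `x` from `y`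
(`⊤` if no set of edges disconnects them, e.g. when `x = y`). -/
noncomputable def lam (G : Multigraph V) (x y : V) : ℕ∞ :=
  sInf {n : ℕ∞ | ∃ F : Multiset (Sym2 V), F ≤ G.edges ∧
      ¬ (G.deleteEdges F).Reachable x y ∧ n = (Multiset.card F : ℕ∞)}

open Classical in
/-- The multigraph with edge multiset `F`, discarding self-loops. -/
noncomputable def ofEdges (F : Multiset (Sym2 V)) : Multigraph V :=
  ⟨F.filter (fun e => ¬ e.IsDiag), fun e he => (Multiset.mem_filter.mp he).2⟩

open Classical in
/-- The subgraph of `G` induced by the vertex set `S`. -/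
noncomputable def induce (G : Multigraph V) (S : Set V) : Multigraph V :=
  ⟨G.edges.filter (fun e => ∀ v ∈ e, v ∈ S), fun e he =>
      G.loopless e (Multiset.mem_filter.mp he).1⟩

/-- The induced subgraph `G[S]` is `k`-edge-connected. -/
def IsKEdgeConnectedSet (G : Multigraph V) (k : ℕ) (S : Set V) : Prop :=
  S.Nonempty ∧ ∀ x ∈ S, ∀ y ∈ S, (k : ℕ∞) ≤ (G.induce S).lam x y

/-- `G[S]` is a maximal `k`-edge-connected subgraph of `G`. -/
def IsMaxKEdgeConnectedSubgraph (G : Multigraph V) (k : ℕ) (S : Set V) : Prop :=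
  G.IsKEdgeConnectedSet k S ∧
    ∀ T : Set V, S ⊆ T → G.IsKEdgeConnectedSet k T → T = S


/-- `e` is a `k`-interconnection edge: its two endpoints lie in different maximal
`k`-edge-connected subgraphs of `G`. -/
def IsInterconnectionEdge (G : Multigraph V) (k : ℕ) (e : Sym2 V) : Prop :=
  ¬ ∃ S : Set V, G.IsMaxKEdgeConnectedSubgraph k S ∧ ∀ v ∈ e, v ∈ S

open Classical in
/-- The multiset of `k`-interconnection edges of `G`. -/
noncomputable def interEdges (G : Multigraph V) (k : ℕ) : Multiset (Sym2 V) :=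
  G.edges.filter (G.IsInterconnectionEdge k)

/-- The union of two multigraphs on the same vertex type: the multiset union of edges. -/
def union (G H : Multigraph V) : Multigraph V :=
  ⟨G.edges + H.edges, fun e he => by
    rcases Multiset.mem_add.mp he with h | h
    · exact G.loopless e h
    · exact H.loopless e h⟩

end Multigraph

/-!
A set of edges disconnects `x` from `y` only if it contains the whole boundary of the component of
`x` that remains, so a set `S` is `k`-edge-connected when every `A` splitting `S` is crossed by at
least `k` edges of `G[S]`. Hence a union of `k`-edge-connected sets through a common vertex is
`k`-edge-connected.

Let `S` be maximal `k`-edge-connected in `G ∪ H` and let `A` split `S`. Either `A` also splits some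
maximal `k`-edge-connected set `M` of `G` meeting `S`: then `M ⊆ S` by maximality, and `C[M]` alone
contributes `k` crossing edges. Or all edges of `G[S]` crossing `A` are interconnection edges of
`G`, hence edges of `C`, and replacing `G` by `C` loses no crossing edge.
-/

namespace Multigraph

variable {V : Type u} {G G' C H : Multigraph V} {k : ℕ} {S T A : Set V} {w x y : V}

open Classical in
/-- The edge cut `δ(A)` of `G`, with multiplicities; `Multigraph.lam` is the least size
of a separating one. It is applied to `G.induce S` to measure how `A` splits `S`. -/
noncomputable def cut (G : Multigraph V) (A : Set V) : Multiset (Sym2 V) :=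
  G.edges.filter fun e => ∃ x ∈ A, ∃ y ∉ A, s(x, y) = e

theorem mem_cut {e : Sym2 V} : e ∈ G.cut A ↔ e ∈ G.edges ∧ ∃ x ∈ A, ∃ y ∉ A, s(x, y) = e := by
  classical exact Multiset.mem_filter

theorem cut_le_edges (G : Multigraph V) (A : Set V) : G.cut A ≤ G.edges := by
  classical exact Multiset.filter_le _ _

theorem cut_mono (h : G.edges ≤ G'.edges) (A : Set V) : G.cut A ≤ G'.cut A := by
  classical exact Multiset.filter_le_filter _ h

theorem edges_le_edges_union_left (G H : Multigraph V) : G.edges ≤ (G.union H).edges :=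
  Multiset.le_add_right _ _

theorem edges_union_mono_left (h : G.edges ≤ G'.edges) (H : Multigraph V) :
    (G.union H).edges ≤ (G'.union H).edges :=
  add_le_add_left h _

theorem edges_induce_mono (h : G.edges ≤ G'.edges) (hST : S ⊆ T) :
    (G.induce S).edges ≤ (G'.induce T).edges := by
  classical
  exact (Multiset.filter_le_filter _ h).trans <|
    Multiset.monotone_filter_right _ fun _ he v hv => hST (he v hv)

theorem mem_edges_induce {e : Sym2 V} :
    e ∈ (G.induce S).edges ↔ e ∈ G.edges ∧ ∀ v ∈ e, v ∈ S := by
  classical exact Multiset.mem_filter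

theorem cut_induce_union (G H : Multigraph V) (S A : Set V) :
    ((G.union H).induce S).cut A = (G.induce S).cut A + (H.induce S).cut A := by
  simp only [cut, induce, union, Multiset.filter_add]

theorem cut_induce_le_of_forall_mem_cut_isInterconnectionEdge (hb : G.interEdges k ≤ C.edges)
    (h : ∀ e ∈ (G.induce S).cut A, G.IsInterconnectionEdge k e) :
    (G.induce S).cut A ≤ (C.induce S).cut A := by
  classical
  have hC : (G.induce S).cut A ≤ C.edges :=
    (Multiset.le_filter.mpr ⟨(cut_le_edges _ _).trans (Multiset.filter_le _ _), h⟩).trans hb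
  exact Multiset.le_filter.mpr
    ⟨Multiset.le_filter.mpr ⟨hC, fun _ he => (mem_edges_induce.mp (mem_cut.mp he).1).2⟩,
      fun _ he => (mem_cut.mp he).2⟩

theorem Reachable.mem_of_cut_eq_zero (hxy : G.Reachable x y) (hA : G.cut A = 0) (hx : x ∈ A) :
    y ∈ A := by
  induction hxy with
  | refl => exact hx
  | tail _ hedge hmem =>
    by_contra hnot
    exact Multiset.eq_zero_iff_forall_notMem.mp hA _
      (mem_cut.mpr ⟨hedge, _, hmem, _, hnot, rfl⟩)

theorem cut_setOf_reachable (G : Multigraph V) (x : V) : G.cut {z | G.Reachable x z} = 0 := by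
  refine Multiset.eq_zero_of_forall_notMem fun e he => ?_
  obtain ⟨hedge, y, hy, z, hz, rfl⟩ := mem_cut.mp he
  exact hz (Relation.ReflTransGen.tail hy hedge)

open Classical in
theorem cut_deleteEdges_eq_zero_iff {F : Multiset (Sym2 V)} :
    (G.deleteEdges F).cut A = 0 ↔ G.cut A ≤ F := by
  have hcut : (G.deleteEdges F).cut A =
      G.cut A - F.filter fun e => ∃ x ∈ A, ∃ y ∉ A, s(x, y) = e := Multiset.filter_sub _ _ _
  rw [hcut, tsub_eq_zero_iff_le, Multiset.le_filter]
  exact and_iff_left fun _ he => (mem_cut.mp he).2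

theorem le_lam_iff {n : ℕ∞} :
    n ≤ G.lam x y ↔ ∀ A : Set V, x ∈ A → y ∉ A → n ≤ (G.cut A).card := by
  constructor
  · intro h A hx hy
    refine h.trans (sInf_le ⟨G.cut A, cut_le_edges G A, fun hxy => hy ?_, rfl⟩)
    exact hxy.mem_of_cut_eq_zero (cut_deleteEdges_eq_zero_iff.mpr le_rfl) hx
  · refine fun h => le_sInf ?_
    rintro _ ⟨F, -, hxy, rfl⟩
    have hF : G.cut {z | (G.deleteEdges F).Reachable x z} ≤ F :=
      cut_deleteEdges_eq_zero_iff.mp (cut_setOf_reachable _ x)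
    exact (h _ Relation.ReflTransGen.refl hxy).trans (by exact_mod_cast Multiset.card_le_card hF)

theorem isKEdgeConnectedSet_iff_le_card_cut :
    G.IsKEdgeConnectedSet k S ↔ S.Nonempty ∧
      ∀ A : Set V, ∀ x ∈ S, ∀ y ∈ S, x ∈ A → y ∉ A → k ≤ ((G.induce S).cut A).card := by
  simp only [IsKEdgeConnectedSet, le_lam_iff, Nat.cast_le]
  exact and_congr_right fun _ =>
    ⟨fun h A x hx y hy => h x hx y hy A, fun h x hx y hy A => h A x hx y hy⟩

theorem IsKEdgeConnectedSet.le_card_cut (hS : G.IsKEdgeConnectedSet k S)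
    (hG : G.edges ≤ G'.edges) (hST : S ⊆ T) (hx : x ∈ S) (hy : y ∈ S) (hxA : x ∈ A)
    (hyA : y ∉ A) : k ≤ ((G'.induce T).cut A).card :=
  ((isKEdgeConnectedSet_iff_le_card_cut.mp hS).2 A x hx y hy hxA hyA).trans <|
    Multiset.card_le_card (cut_mono (edges_induce_mono hG hST) A)

theorem IsKEdgeConnectedSet.mono (hS : G.IsKEdgeConnectedSet k S) (h : G.edges ≤ G'.edges) :
    G'.IsKEdgeConnectedSet k S :=
  isKEdgeConnectedSet_iff_le_card_cut.mpr
    ⟨hS.1, fun _ _ hx _ hy => hS.le_card_cut h subset_rfl hx hy⟩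

theorem isKEdgeConnectedSet_sUnion {𝒮 : Set (Set V)} (hne : 𝒮.Nonempty)
    (h𝒮 : ∀ S ∈ 𝒮, G.IsKEdgeConnectedSet k S) (hw : ∀ S ∈ 𝒮, w ∈ S) :
    G.IsKEdgeConnectedSet k (⋃₀ 𝒮) := by
  obtain ⟨S₀, hS₀⟩ := hne
  refine isKEdgeConnectedSet_iff_le_card_cut.mpr ⟨⟨w, S₀, hS₀, hw S₀ hS₀⟩, ?_⟩
  rintro A x ⟨S, hS, hxS⟩ y ⟨T, hT, hyT⟩ hxA hyA
  by_cases hwA : w ∈ A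
  · exact (h𝒮 T hT).le_card_cut le_rfl (Set.subset_sUnion_of_mem hT) (hw T hT) hyT hwA hyA
  · exact (h𝒮 S hS).le_card_cut le_rfl (Set.subset_sUnion_of_mem hS) hxS (hw S hS) hxA hwA

theorem IsKEdgeConnectedSet.exists_superset_isMaxKEdgeConnectedSubgraph
    (hS : G.IsKEdgeConnectedSet k S) : ∃ T, S ⊆ T ∧ G.IsMaxKEdgeConnectedSubgraph k T := by
  obtain ⟨w, hw⟩ := hS.1
  let 𝒮 : Set (Set V) := {T | G.IsKEdgeConnectedSet k T ∧ w ∈ T}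
  have hS𝒮 : S ∈ 𝒮 := ⟨hS, hw⟩
  have hST : S ⊆ ⋃₀ 𝒮 := Set.subset_sUnion_of_mem hS𝒮
  refine ⟨⋃₀ 𝒮, hST, ?_, fun U hU hUk => ?_⟩
  · exact isKEdgeConnectedSet_sUnion ⟨S, hS𝒮⟩ (fun _ hT => hT.1) fun _ hT => hT.2
  · exact (Set.subset_sUnion_of_mem (show U ∈ 𝒮 from ⟨hUk, hU (hST hw)⟩)).antisymm hU

theorem exists_isMaxKEdgeConnectedSubgraph_mem_iff :
    (∃ S, G.IsMaxKEdgeConnectedSubgraph k S ∧ x ∈ S ∧ y ∈ S) ↔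
      ∃ S, G.IsKEdgeConnectedSet k S ∧ x ∈ S ∧ y ∈ S := by
  refine ⟨fun ⟨S, hS, hxy⟩ => ⟨S, hS.1, hxy⟩, fun ⟨S, hS, hx, hy⟩ => ?_⟩
  obtain ⟨T, hST, hT⟩ := hS.exists_superset_isMaxKEdgeConnectedSubgraph
  exact ⟨T, hT, hST hx, hST hy⟩

theorem IsMaxKEdgeConnectedSubgraph.subset_of_mem (hS : G.IsMaxKEdgeConnectedSubgraph k S)
    (hT : G.IsKEdgeConnectedSet k T) (hwS : w ∈ S) (hwT : w ∈ T) : T ⊆ S := by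
  have hST : G.IsKEdgeConnectedSet k (⋃₀ {S, T}) :=
    isKEdgeConnectedSet_sUnion (w := w) (Set.insert_nonempty S {T})
      (by simp [hS.1, hT]) (by simp [hwS, hwT])
  rw [Set.sUnion_pair] at hST
  exact Set.union_eq_left.mp (hS.2 _ Set.subset_union_left hST)

theorem IsMaxKEdgeConnectedSubgraph.isKEdgeConnectedSet_union_of_interEdges_le
    (hS : (G.union H).IsMaxKEdgeConnectedSubgraph k S)
    (ha : ∀ M : Set V, G.IsMaxKEdgeConnectedSubgraph k M → C.IsKEdgeConnectedSet k M)
    (hb : G.interEdges k ≤ C.edges) : (C.union H).IsKEdgeConnectedSet k S := by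
  refine isKEdgeConnectedSet_iff_le_card_cut.mpr ⟨hS.1.1, fun A x hx y hy hxA hyA => ?_⟩
  by_cases hinter : ∀ e ∈ (G.induce S).cut A, G.IsInterconnectionEdge k e
  · calc
      k ≤ (((G.union H).induce S).cut A).card := hS.1.le_card_cut le_rfl subset_rfl hx hy hxA hyA
      _ ≤ (((C.union H).induce S).cut A).card := by
        rw [cut_induce_union, cut_induce_union]
        exact Multiset.card_le_card <| add_le_add_left
          (cut_induce_le_of_forall_mem_cut_isInterconnectionEdge hb hinter) _
  · simp only [IsInterconnectionEdge, not_forall, not_not] at hinter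
    obtain ⟨e, he, M, hM, heM⟩ := hinter
    obtain ⟨heS, p, hpA, q, hqA, rfl⟩ := mem_cut.mp he
    have hp : p ∈ M := heM p (Sym2.mem_mk_left p q)
    have hq : q ∈ M := heM q (Sym2.mem_mk_right p q)
    have hMS : M ⊆ S := hS.subset_of_mem (hM.1.mono (edges_le_edges_union_left G H))
      ((mem_edges_induce.mp heS).2 p (Sym2.mem_mk_left p q)) hp
    exact (ha M hM).le_card_cut (edges_le_edges_union_left C H) hMS hp hq hpA hqA

end Multigraph

theorem sparse_certificate_union_property_general {V : Type u} (G C : Multigraph V) (k : ℕ)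
    (hsub : C.edges ≤ G.edges)
    (ha : ∀ S : Set V, G.IsMaxKEdgeConnectedSubgraph k S → C.IsKEdgeConnectedSet k S)
    (hb : G.interEdges k ≤ C.edges) (H : Multigraph V) (u v : V) :
    (∃ S : Set V, (C.union H).IsMaxKEdgeConnectedSubgraph k S ∧ u ∈ S ∧ v ∈ S) ↔
      (∃ S : Set V, (G.union H).IsMaxKEdgeConnectedSubgraph k S ∧ u ∈ S ∧ v ∈ S) := by
  constructor
  · rintro ⟨S, hS, huv⟩
    exact Multigraph.exists_isMaxKEdgeConnectedSubgraph_mem_iff.mpr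
      ⟨S, hS.1.mono (Multigraph.edges_union_mono_left hsub H), huv⟩
  · rintro ⟨S, hS, huv⟩
    exact Multigraph.exists_isMaxKEdgeConnectedSubgraph_mem_iff.mpr
      ⟨S, hS.isKEdgeConnectedSet_union_of_interEdges_le ha hb, huv⟩

theorem sparse_certificate_union_property {V : Type u} [Fintype V]
    (G C : Multigraph V) (k : ℕ) (hk : 1 ≤ k)
    (hsub : C.edges ≤ G.edges)
    (ha : ∀ S : Set V,
        C.IsMaxKEdgeConnectedSubgraph k S ↔ G.IsMaxKEdgeConnectedSubgraph k S)
    (hb : G.interEdges k ≤ C.edges) :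
    ∀ (H : Multigraph V) (u v : V),
      (∃ S : Set V, (C.union H).IsMaxKEdgeConnectedSubgraph k S ∧ u ∈ S ∧ v ∈ S) ↔
        (∃ S : Set V, (G.union H).IsMaxKEdgeConnectedSubgraph k S ∧ u ∈ S ∧ v ∈ S) :=
  sparse_certificate_union_property_general G C k hsub (fun S hS => ((ha S).mpr hS).1) hb
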